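/- Let b > 0, let θ₀, θ₁, θ_t, θ_∞ ∈ ℝ, and let σ ∈ ℝ with σ ≠ 0. Set α = −e^{2πb(ib/2 + θ₁ + θ_t)}, β = −e^{2πb(ib/2 + θ₀ − θ_∞)}, γ = −e^{2πb(ib/2 − θ₁ + θ_t)}, δ = −e^{2πb(ib/2 + θ₀ + θ_∞)}, q = e^{2iπb²}, and z = e^{2πbσ}. Define C(s) = 4 ∏_{ε=±1} cosh(πb(−ib/2 − θ_t + s + εθ₁)) cosh(πb(−ib/2 − θ₀ + s + εθ_∞)) / [ sinh(2πbs) sinh(πb(−2s + ib)) ]. Then −e^{2πb(ib/2 + θ₀ + θ_t)} · C(−σ) = (1 − αz)(1 − βz)(1 − γz)(1 − δz) / [ (1 − z²)(1 − qz²) ]. -/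

import Mathlib

open Complex

/-!
Writing `1 + e^{2x} = 2 eˣ cosh x` and `1 - e^{2y} = -2 eʸ sinh y`, every factor on the
Askey–Wilson side becomes a hyperbolic function times an exponential. Since `cosh` is even and
`sinh` is odd, the hyperbolic functions are those of `C(-σ)` up to a sign, and the exponentials
multiply to `e^{2πb(ib/2 + θ₀ + θ_t)}`.
-/

/-- The coefficient function `C(s)` of the difference operator for the renormalized Virasoro fusion
kernel, with dual parameter assignment; the shift `σ ↦ σ + ib` has coefficient `C(-σ)`.
The parameters may be complex, and the product over `ε = ±1` is written out. -/
noncomputable def fusionShiftCoeff (b θ0 θ1 θt θinf s : ℂ) : ℂ :=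
  4 * (cosh (Real.pi * b * (-(I * b) / 2 - θt + s + θ1)) *
      cosh (Real.pi * b * (-(I * b) / 2 - θt + s - θ1)) *
      (cosh (Real.pi * b * (-(I * b) / 2 - θ0 + s + θinf)) *
        cosh (Real.pi * b * (-(I * b) / 2 - θ0 + s - θinf)))) /
    (sinh (2 * Real.pi * b * s) * sinh (Real.pi * b * (-(2 * s) + I * b)))

/-- The coefficient of `f(qz)` in the Askey–Wilson `q`-difference operator with parameters
`α, β, γ, δ`. -/
noncomputable def askeyWilsonCoeff (α β γ δ q z : ℂ) : ℂ :=
  (1 - α * z) * (1 - β * z) * (1 - γ * z) * (1 - δ * z) / ((1 - z ^ 2) * (1 - q * z ^ 2))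

theorem one_add_exp_two_mul (x : ℂ) : 1 + exp (2 * x) = 2 * exp x * cosh x := by
  rw [mul_right_comm, two_cosh, add_mul, ← exp_add, ← exp_add, neg_add_cancel, exp_zero, two_mul,
    add_comm]

theorem one_sub_exp_two_mul (x : ℂ) : 1 - exp (2 * x) = -(2 * exp x * sinh x) := by
  rw [mul_right_comm, two_sinh, sub_mul, ← exp_add, ← exp_add, neg_add_cancel, exp_zero, two_mul,
    neg_sub]

theorem sinh_ne_zero_of_re_ne_zero {x : ℂ} (hx : x.re ≠ 0) : sinh x ≠ 0 := by
  intro h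
  have hexp : 1 = exp (2 * x) :=
    sub_eq_zero.mp (by rw [one_sub_exp_two_mul, h, mul_zero, neg_zero])
  have hnorm : Real.exp (2 * x).re = 1 := by rw [← norm_exp, ← hexp, norm_one]
  exact hx (by simpa using hnorm)

theorem prod_one_add_exp_div_prod_one_sub_exp (x₁ x₂ x₃ x₄ : ℂ) {y₁ y₂ : ℂ}
    (hy₁ : sinh y₁ ≠ 0) (hy₂ : sinh y₂ ≠ 0) :
    (1 + exp (2 * x₁)) * (1 + exp (2 * x₂)) * (1 + exp (2 * x₃)) * (1 + exp (2 * x₄)) /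
        ((1 - exp (2 * y₁)) * (1 - exp (2 * y₂))) =
      exp (x₁ + x₂ + x₃ + x₄ - y₁ - y₂) *
        (4 * (cosh x₁ * cosh x₂ * cosh x₃ * cosh x₄) / (sinh y₁ * sinh y₂)) := by
  simp only [one_add_exp_two_mul, one_sub_exp_two_mul, exp_sub, exp_add]
  field_simp
  ring

theorem one_sub_neg_exp_mul_exp (b u σ : ℂ) :
    1 - -exp (2 * Real.pi * b * u) * exp (2 * Real.pi * b * σ) =
      1 + exp (2 * (Real.pi * b * (u + σ))) := by
  rw [neg_mul, sub_neg_eq_add, ← exp_add]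
  ring_nf

theorem fusionShiftCoeff_neg (b θ0 θ1 θt θinf σ : ℂ) :
    fusionShiftCoeff b θ0 θ1 θt θinf (-σ) =
      -(4 * (cosh (Real.pi * b * (I * b / 2 + θ1 + θt + σ)) *
          cosh (Real.pi * b * (I * b / 2 + θ0 - θinf + σ)) *
          cosh (Real.pi * b * (I * b / 2 - θ1 + θt + σ)) *
          cosh (Real.pi * b * (I * b / 2 + θ0 + θinf + σ))) /
        (sinh (2 * Real.pi * b * σ) * sinh (Real.pi * b * (2 * σ + I * b)))) := by
  have hα : cosh (Real.pi * b * (-(I * b) / 2 - θt + -σ - θ1)) =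
      cosh (Real.pi * b * (I * b / 2 + θ1 + θt + σ)) := by
    rw [← cosh_neg]; ring_nf
  have hβ : cosh (Real.pi * b * (-(I * b) / 2 - θ0 + -σ + θinf)) =
      cosh (Real.pi * b * (I * b / 2 + θ0 - θinf + σ)) := by
    rw [← cosh_neg]; ring_nf
  have hγ : cosh (Real.pi * b * (-(I * b) / 2 - θt + -σ + θ1)) =
      cosh (Real.pi * b * (I * b / 2 - θ1 + θt + σ)) := by
    rw [← cosh_neg]; ring_nf
  have hδ : cosh (Real.pi * b * (-(I * b) / 2 - θ0 + -σ - θinf)) =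
      cosh (Real.pi * b * (I * b / 2 + θ0 + θinf + σ)) := by
    rw [← cosh_neg]; ring_nf
  rw [fusionShiftCoeff, hα, hβ, hγ, hδ, mul_neg _ σ, sinh_neg, mul_neg 2 σ, neg_neg]
  ring

theorem stmt18_general (b θ0 θ1 θt θinf σ α β γ δ q z : ℂ)
    (hsinh₁ : sinh (2 * Real.pi * b * σ) ≠ 0)
    (hsinh₂ : sinh (Real.pi * b * (2 * σ + I * b)) ≠ 0)
    (hα : α = -exp (2 * Real.pi * b * (I * b / 2 + θ1 + θt)))
    (hβ : β = -exp (2 * Real.pi * b * (I * b / 2 + θ0 - θinf)))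
    (hγ : γ = -exp (2 * Real.pi * b * (I * b / 2 - θ1 + θt)))
    (hδ : δ = -exp (2 * Real.pi * b * (I * b / 2 + θ0 + θinf)))
    (hq : q = exp (2 * I * Real.pi * b ^ 2))
    (hz : z = exp (2 * Real.pi * b * σ)) :
    -exp (2 * Real.pi * b * (I * b / 2 + θ0 + θt)) * fusionShiftCoeff b θ0 θ1 θt θinf (-σ) =
      askeyWilsonCoeff α β γ δ q z := by
  have hz_sq : z ^ 2 = exp (2 * (2 * Real.pi * b * σ)) := by
    rw [hz, ← exp_nat_mul, Nat.cast_ofNat]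
  have hqz_sq : q * z ^ 2 = exp (2 * (Real.pi * b * (2 * σ + I * b))) := by
    rw [hq, hz_sq, ← exp_add]
    ring_nf
  rw [askeyWilsonCoeff, hqz_sq, hz_sq, hα, hβ, hγ, hδ, hz]
  simp only [one_sub_neg_exp_mul_exp]
  rw [prod_one_add_exp_div_prod_one_sub_exp _ _ _ _ hsinh₁ hsinh₂,
    fusionShiftCoeff_neg, neg_mul_neg]
  congr 2
  ring

/-- The coefficient identity underlying equation (4.13) of the paper:
`−e^{2πb(ib/2+θ₀+θ_t)} C(−σ)` equals the coefficient of `f(qz)` in the Askey–Wilson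
`q`-difference operator, under the parameter correspondence (4.6). -/
theorem stmt18 (b θ0 θ1 θt θinf σ : ℝ) (hb : 0 < b) (hσ : σ ≠ 0) (α β γ δ q z : ℂ)
    (hα : α = -Complex.exp (2 * Real.pi * b * (I * b / 2 + θ1 + θt)))
    (hβ : β = -Complex.exp (2 * Real.pi * b * (I * b / 2 + θ0 - θinf)))
    (hγ : γ = -Complex.exp (2 * Real.pi * b * (I * b / 2 - θ1 + θt)))
    (hδ : δ = -Complex.exp (2 * Real.pi * b * (I * b / 2 + θ0 + θinf)))
    (hq : q = Complex.exp (2 * I * Real.pi * b ^ 2))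
    (hz : z = Complex.exp (2 * Real.pi * b * σ)) :
    -Complex.exp (2 * Real.pi * b * (I * b / 2 + θ0 + θt)) *
        (4 * (Complex.cosh (Real.pi * b * (-(I * b) / 2 - θt + -σ + θ1)) *
            Complex.cosh (Real.pi * b * (-(I * b) / 2 - θt + -σ - θ1)) *
            (Complex.cosh (Real.pi * b * (-(I * b) / 2 - θ0 + -σ + θinf)) *
              Complex.cosh (Real.pi * b * (-(I * b) / 2 - θ0 + -σ - θinf)))) /
          (Complex.sinh (2 * Real.pi * b * -σ) *
            Complex.sinh (Real.pi * b * (-(2 * -σ) + I * b))))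
      = (1 - α * z) * (1 - β * z) * (1 - γ * z) * (1 - δ * z) /
          ((1 - z ^ 2) * (1 - q * z ^ 2)) :=
  stmt18_general b θ0 θ1 θt θinf σ α β γ δ q z
    (sinh_ne_zero_of_re_ne_zero (by simp [Real.pi_ne_zero, hb.ne', hσ]))
    (sinh_ne_zero_of_re_ne_zero (by simp [Real.pi_ne_zero, hb.ne', hσ])) hα hβ hγ hδ hq hz
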